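/- Let Ω be a measurable space, Y a finite nonempty type, f : Ω → Y a measurable function, and μ, ν probability measures on Ω. Suppose c_A ∈ Y and real numbers p_A, p_B with p_A ≥ p_B satisfy μ{ω : f(ω) = c_A} ≥ p_A and μ{ω : f(ω) = c} ≤ p_B for every c ≠ c_A. If there exists some c ≠ c_A with ν{ω : f(ω) = c} ≥ ν{ω : f(ω) = c_A}, then dTV(μ, ν) ≥ (p_A − p_B)/2. -/

import Mathlib

open MeasureTheory

/-- Total variation distance between two measures:
`dTV(μ, ν) = sup over measurable sets A of |μ(A) − ν(A)|`. -/
noncomputable def tvDist {Ω : Type*} [MeasurableSpace Ω] (μ ν : Measure Ω) : ℝ :=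
  ⨆ A : {s : Set Ω // MeasurableSet s}, |(μ A.1).toReal - (ν A.1).toReal|

section TotalVariation

variable {Ω : Type*} [MeasurableSpace Ω] (μ ν : Measure Ω) [IsFiniteMeasure μ] [IsFiniteMeasure ν]

theorem bddAbove_range_abs_measureReal_sub :
    BddAbove (Set.range fun A : {s : Set Ω // MeasurableSet s} => |μ.real A.1 - ν.real A.1|) := by
  refine ⟨max (μ.real Set.univ) (ν.real Set.univ), ?_⟩
  rintro _ ⟨A, rfl⟩
  exact abs_sub_le_of_nonneg_of_le
    measureReal_nonneg (le_max_of_le_left (measureReal_mono (Set.subset_univ _)))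
    measureReal_nonneg (le_max_of_le_right (measureReal_mono (Set.subset_univ _)))

theorem abs_measureReal_sub_le_tvDist {s : Set Ω} (hs : MeasurableSet s) :
    |μ.real s - ν.real s| ≤ tvDist μ ν :=
  le_ciSup (bddAbove_range_abs_measureReal_sub μ ν) ⟨s, hs⟩

variable {μ ν}

theorem measureReal_sub_le_two_mul_tvDist_of_le {s t : Set Ω} (hs : MeasurableSet s)
    (ht : MeasurableSet t) (hν : ν.real s ≤ ν.real t) :
    μ.real s - μ.real t ≤ 2 * tvDist μ ν := by
  have s_loss : μ.real s - ν.real s ≤ tvDist μ ν :=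
    (abs_sub_le_iff.mp (abs_measureReal_sub_le_tvDist μ ν hs)).1
  have t_gain : ν.real t - μ.real t ≤ tvDist μ ν :=
    (abs_sub_le_iff.mp (abs_measureReal_sub_le_tvDist μ ν ht)).2
  calc μ.real s - μ.real t
      ≤ (μ.real s - ν.real s) + (ν.real t - μ.real t) := by linarith
    _ ≤ 2 * tvDist μ ν := by linarith

theorem prediction_change_forces_tv_distance_general
    {Y : Type*} [MeasurableSpace Y] [MeasurableSingletonClass Y]
    {f : Ω → Y} (hf : Measurable f) {a b : Y} {pA pB : ℝ}
    (hA : pA ≤ μ.real {ω | f ω = a}) (hB : μ.real {ω | f ω = b} ≤ pB)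
    (hchange : ν.real {ω | f ω = a} ≤ ν.real {ω | f ω = b}) :
    (pA - pB) / 2 ≤ tvDist μ ν := by
  have measurableSet_fiber (c : Y) : MeasurableSet {ω | f ω = c} :=
    hf (measurableSet_singleton c)
  have margin_le : pA - pB ≤ 2 * tvDist μ ν :=
    (sub_le_sub hA hB).trans
      (measureReal_sub_le_two_mul_tvDist_of_le
        (measurableSet_fiber a) (measurableSet_fiber b) hchange)
  linarith

end TotalVariation

theorem prediction_change_forces_tv_distance
    {Ω Y : Type*} [MeasurableSpace Ω] [MeasurableSpace Y]
    [MeasurableSingletonClass Y] [Fintype Y] [Nonempty Y]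
    (f : Ω → Y) (hf : Measurable f)
    (μ ν : Measure Ω) [IsProbabilityMeasure μ] [IsProbabilityMeasure ν]
    (cA : Y) (pA pB : ℝ) (hpAB : pA ≥ pB)
    (hA : (μ {ω | f ω = cA}).toReal ≥ pA)
    (hB : ∀ c, c ≠ cA → (μ {ω | f ω = c}).toReal ≤ pB)
    (hchange : ∃ c, c ≠ cA ∧ (ν {ω | f ω = c}).toReal ≥ (ν {ω | f ω = cA}).toReal) :
    tvDist μ ν ≥ (pA - pB) / 2 := by
  obtain ⟨c, hc, hνc⟩ := hchange
  exact prediction_change_forces_tv_distance_general hf hA (hB c hc) hνc
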